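/- For every policy π visited by Bland(𝔅_n, π_0, 𝒩_{𝔅_n}), at most one of the edges travel(i) with i ∈ {1,…,n} is an improving switch for π. -/

import Mathlib

/-! ## The Markov decision process `𝔅_n` -/

/-- Vertices of the MDP `𝔅_n`: a transportation vertex `t`, a sink `s`, a dummy vertex `d`,
and vertices `a i`, `b i` for `i ∈ {1,…,n}`. -/
inductive BV : Type where
  | t : BV
  | s : BV
  | d : BV
  | a : ℕ → BV
  | b : ℕ → BV
deriving DecidableEq

/-- The vertex `a i` for `i ∈ {1,…,n+1}`, with the convention `a (n+1) = s`. -/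
def aN (n i : ℕ) : BV := if i = n + 1 then BV.s else BV.a i

/-- The vertex `b i` for `i ∈ {1,…,n+1}`, with the convention `b (n+1) = d`. -/
def bN (n i : ℕ) : BV := if i = n + 1 then BV.d else BV.b i

/-- The vertex set of `𝔅_n`. -/
def IsBVertex (n : ℕ) : BV → Prop
  | BV.t => True
  | BV.s => True
  | BV.d => True
  | BV.a i => 1 ≤ i ∧ i ≤ n
  | BV.b i => 1 ≤ i ∧ i ≤ n

/-- The edge relation of `𝔅_n`: travel, enter, skip, board, stay, leave edges,
the edge `(d,s)` and the self-loop `(s,s)`. -/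
def BEdge (n : ℕ) (u v : BV) : Prop :=
  (∃ i, 1 ≤ i ∧ i ≤ n ∧ u = BV.t ∧ v = BV.a i) ∨
  (∃ i, 1 ≤ i ∧ i ≤ n ∧ u = BV.a i ∧ v = BV.b i) ∨
  (∃ i, 1 ≤ i ∧ i ≤ n ∧ u = BV.a i ∧ v = aN n (i + 1)) ∨
  (∃ i, 1 ≤ i ∧ i ≤ n ∧ u = BV.a i ∧ v = BV.t) ∨
  (∃ i, 1 ≤ i ∧ i ≤ n ∧ u = BV.b i ∧ v = bN n (i + 1)) ∨
  (∃ i, 1 ≤ i ∧ i ≤ n ∧ u = BV.b i ∧ v = aN n (i + 1)) ∨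
  (u = BV.d ∧ v = BV.s) ∨ (u = BV.s ∧ v = BV.s)

/-- The reward function of `𝔅_n`: `r(enter i) = 2^i`, `r(stay i) = 3/4`,
`r(board i) = -2^i + 5/4`, and reward `0` on all other edges. -/
def rB (n : ℕ) (u v : BV) : ℚ :=
  match u, v with
  | BV.a i, BV.b j => if i = j then 2 ^ i else 0
  | BV.a i, BV.t => -(2 ^ i) + 5 / 4
  | BV.b i, BV.b j => if j = i + 1 then 3 / 4 else 0
  | BV.b i, BV.d => if i = n then 3 / 4 else 0
  | _, _ => 0

/-- A policy for `𝔅_n` chooses an outgoing edge at every vertex. -/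
def IsBPolicy (n : ℕ) (π : BV → BV) : Prop := ∀ u, IsBVertex n u → BEdge n u (π u)

/-- A policy is weak unichain if it reaches the sink `s` from every vertex. -/
def BWeakUnichain (n : ℕ) (π : BV → BV) : Prop :=
  ∀ u, IsBVertex n u → ∃ k, π^[k] u = BV.s

open Classical in
/-- The value of a vertex `v` w.r.t. a (weak unichain) policy `π`:
the sum of the rewards along the path that `π` takes from `v` to the sink `s`. -/
noncomputable def BVal (n : ℕ) (π : BV → BV) (v : BV) : ℚ :=
  if h : ∃ k, π^[k] v = BV.s then
    ∑ i ∈ Finset.range (Nat.find h), rB n (π^[i] v) (π^[i + 1] v)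
  else 0

/-- The reduced costs of the edge `(u,v)` w.r.t. the policy `π`. -/
noncomputable def zB (n : ℕ) (π : BV → BV) (u v : BV) : ℚ :=
  rB n u v + BVal n π v - BVal n π u

/-- The edge `(u,v)` is an improving switch for `π` if its reduced costs are positive. -/
def BImproving (n : ℕ) (π : BV → BV) (u v : BV) : Prop :=
  BEdge n u v ∧ 0 < zB n π u v

/-- The Bland numbering `𝒩_{𝔅_n}` of the edges of `𝔅_n`. -/
def NB (n : ℕ) (u v : BV) : ℕ :=
  match u, v with
  | BV.t, BV.a i => i
  | BV.a i, BV.b _ => n + 1 + 5 * (i - 1)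
  | BV.a i, BV.a _ => n + 2 + 5 * (i - 1)
  | BV.a i, BV.s => n + 2 + 5 * (i - 1)
  | BV.a i, BV.t => n + 3 + 5 * (i - 1)
  | BV.b i, BV.b _ => n + 4 + 5 * (i - 1)
  | BV.b i, BV.d => n + 4 + 5 * (i - 1)
  | BV.b i, BV.a _ => n + 5 + 5 * (i - 1)
  | BV.b i, BV.s => n + 5 + 5 * (i - 1)
  | BV.d, BV.s => 6 * n + 1
  | BV.s, BV.s => 6 * n + 2
  | _, _ => 0

/-- One step of Bland's policy iteration with edge numbering `N`:
apply the improving switch with the smallest number. -/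
def IsBlandStep (n : ℕ) (N : BV → BV → ℕ) (π π' : BV → BV) : Prop :=
  ∃ u v, BImproving n π u v ∧ (∀ u' v', BImproving n π u' v' → N u v ≤ N u' v') ∧
    π' = Function.update π u v

/-- `BlandReaches n N π ψ` says that Bland's policy iteration started at `π` visits `ψ`. -/
def BlandReaches (n : ℕ) (N : BV → BV → ℕ) : (BV → BV) → (BV → BV) → Prop :=
  Relation.ReflTransGen (IsBlandStep n N)

/-- The canonical policy `π_0` for `0`: `travel 1`, `skip i` and `leave i` are active. -/
def pi0 (n : ℕ) : BV → BV := fun u =>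
  match u with
  | BV.t => BV.a 1
  | BV.a i => aN n (i + 1)
  | BV.b i => aN n (i + 1)
  | BV.d => BV.s
  | BV.s => BV.s

/-- The optimal policy `π_*`: `travel 1`, `enter i` for all `i`, `leave j` for `j < n`,
and `stay n` are active. -/
def piStar (n : ℕ) : BV → BV := fun u =>
  match u with
  | BV.t => BV.a 1
  | BV.a i => BV.b i
  | BV.b i => if i = n then BV.d else BV.a (i + 1)
  | BV.d => BV.s
  | BV.s => BV.s

/-! ## Bits and canonical policies -/

/-- The least significant set bit `ℓ_1(x)` (1-based). -/
noncomputable def lsb (x : ℕ) : ℕ := sInf {i | 1 ≤ i ∧ Nat.testBit x (i - 1)}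

/-- The most significant set bit `m(x)` (1-based). -/
noncomputable def msb1 (x : ℕ) : ℕ := sSup {i | 1 ≤ i ∧ Nat.testBit x (i - 1)}

/-- The least unset bit `ℓ_0(x)` (1-based). -/
noncomputable def lzero (x : ℕ) : ℕ := sInf {i | 1 ≤ i ∧ ¬ Nat.testBit x (i - 1)}

/-- `L_i(x) = max { j ≤ i-2 | x_j = 1 or j = 1 }` (1-based bits). -/
noncomputable def Lfun (i x : ℕ) : ℕ :=
  sSup {j | 1 ≤ j ∧ j ≤ i - 2 ∧ (Nat.testBit x (j - 1) ∨ j = 1)}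

/-- `IsCanonical n x π` says that `π` is the canonical policy `π_x` for `x`. -/
noncomputable def IsCanonical (n x : ℕ) (π : BV → BV) : Prop :=
  IsBPolicy n π ∧
  if x = 0 then
    π BV.t = BV.a 1 ∧
      ∀ i, 1 ≤ i → i ≤ n → π (BV.a i) = aN n (i + 1) ∧ π (BV.b i) = aN n (i + 1)
  else
    π BV.t = BV.a (lsb x) ∧
    π (BV.b (msb1 x)) = aN n (msb1 x + 1) ∧
    (∀ i, msb1 x < i → i ≤ n → π (BV.a i) = aN n (i + 1) ∧ π (BV.b i) = aN n (i + 1)) ∧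
    ∀ i, 1 ≤ i → i ≤ n → Nat.testBit x (i - 1) →
      π (BV.a i) = BV.b i ∧
      (i = 2 → π (BV.b 1) = BV.a 2 ∧ (¬ Nat.testBit x 0 → π (BV.a 1) = BV.a 2)) ∧
      (3 ≤ i → Nat.testBit x (i - 2) → π (BV.b (i - 1)) = BV.a i) ∧
      (3 ≤ i → ¬ Nat.testBit x (i - 2) →
        π (BV.b (i - 1)) = BV.b i ∧ π (BV.a (i - 1)) = BV.a i ∧
        π (BV.b (i - 2)) = BV.a (i - 1) ∧
        (Lfun i x < i - 2 →
          ∀ j, Lfun i x + 1 ≤ j → j ≤ i - 2 →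
            π (BV.a j) = BV.t ∧ π (BV.b (j - 1)) = BV.b j) ∧
        (Lfun i x = 1 → ¬ Nat.testBit x 0 → π (BV.a 1) = BV.t))

/-- Activating a list of edges in a policy, from left to right. -/
def activateList (π : BV → BV) (L : List (BV × BV)) : BV → BV :=
  L.foldl (fun σ e => Function.update σ e.1 e.2) π

/-- The canonical phases w.r.t. an odd number `x` (with `ℓ := ℓ_0(x)`), as a list of edges
to be activated in order. -/
noncomputable def phaseList (n x : ℕ) : List (BV × BV) :=
  let ℓ := lzero x
  (if Nat.testBit x ℓ then [(BV.b ℓ, aN n (ℓ + 1))] else []) ++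
  (if Nat.testBit x ℓ ∨ msb1 x < ℓ then [(BV.b (ℓ - 1), BV.b ℓ)] else []) ++
  [(BV.a ℓ, BV.b ℓ), (BV.t, BV.a ℓ)] ++
  ((List.range (ℓ - 2)).map fun j => (BV.a (j + 1), BV.t)) ++
  [(BV.a (ℓ - 1), BV.a ℓ)] ++
  (((List.range (ℓ - 3)).reverse).map fun j => (BV.b (j + 1), BV.b (j + 2))) ++
  (if ℓ = 2 then [(BV.b 1, BV.a 2)] else [])

/-! ## The Markov decision process `𝔇_n` -/

/-- Vertices of `𝔇_n`: the original vertices (`base`), and for every edge `(v,w)` of `𝔅_n`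
other than the self-loop, the gadget vertices `x v w`, `y v w`, `z v w`. -/
inductive DV : Type where
  | base : BV → DV
  | x : BV → BV → DV
  | y : BV → BV → DV
  | z : BV → BV → DV
deriving DecidableEq

/-- The edges of `𝔅_n` that get replaced by gadgets (all edges except the self-loop `(s,s)`). -/
def DEdgePair (n : ℕ) (v w : BV) : Prop := BEdge n v w ∧ v ≠ BV.s

/-- The vertex set of `𝔇_n`. -/
def IsDVertex (n : ℕ) : DV → Prop
  | DV.base v => IsBVertex n v
  | DV.x v w => DEdgePair n v w
  | DV.y v w => DEdgePair n v w
  | DV.z v w => DEdgePair n v w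

/-- The agent vertices of `𝔇_n` (all vertices except the randomization vertices `y v w`). -/
def IsDAgent (n : ℕ) : DV → Prop
  | DV.base v => IsBVertex n v
  | DV.x v w => DEdgePair n v w
  | DV.y _ _ => False
  | DV.z v w => DEdgePair n v w

/-- The agent edges of `𝔇_n`. -/
def DEdge (n : ℕ) (u u' : DV) : Prop :=
  (∃ v w, DEdgePair n v w ∧
    ((u = DV.base v ∧ u' = DV.x v w) ∨ (u = DV.x v w ∧ u' = DV.base v) ∨
     (u = DV.x v w ∧ u' = DV.y v w) ∨ (u = DV.z v w ∧ u' = DV.base w))) ∨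
  (u = DV.base BV.s ∧ u' = DV.base BV.s)

/-- The reward function of `𝔇_n`: the edge `(z v w, w)` carries the reward of the original
edge `(v,w)`; all other agent edges have reward `0`. -/
def rD (n : ℕ) (u u' : DV) : ℚ :=
  match u, u' with
  | DV.z v w, DV.base w' => if w' = w then rB n v w else 0
  | _, _ => 0

/-- A policy for `𝔇_n` chooses an outgoing agent edge at every agent vertex. -/
def IsDPolicy (n : ℕ) (π : DV → DV) : Prop := ∀ u, IsDAgent n u → DEdge n u (π u)

/-- `IsDVal n p π V` says that `V` satisfies the Bellman equations characterizing the value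
function of the policy `π` for `𝔇_n` with probabilities `p`, with `V s = 0`. -/
def IsDVal (n : ℕ) (p : BV → ℚ) (π : DV → DV) (V : DV → ℚ) : Prop :=
  V (DV.base BV.s) = 0 ∧
  (∀ u, IsDAgent n u → V u = rD n u (π u) + V (π u)) ∧
  (∀ v w, DEdgePair n v w →
    V (DV.y v w) = p v * V (DV.z v w) + (1 - p v) * V (DV.base v))

open Classical in
/-- The value function of a (weak unichain) policy `π` for `𝔇_n`: the unique solution of the
Bellman equations (normalized to `0` outside the vertex set). -/
noncomputable def DVal (n : ℕ) (p : BV → ℚ) (π : DV → DV) : DV → ℚ :=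
  if h : ∃! V : DV → ℚ, IsDVal n p π V ∧ ∀ u, ¬ IsDVertex n u → V u = 0 then
    h.exists.choose
  else fun _ => 0

/-- The reduced costs of an agent edge `(u,u')` of `𝔇_n` w.r.t. the policy `π`. -/
noncomputable def zD (n : ℕ) (p : BV → ℚ) (π : DV → DV) (u u' : DV) : ℚ :=
  rD n u u' + DVal n p π u' - DVal n p π u

/-- An agent edge of `𝔇_n` is an improving switch if its reduced costs are positive. -/
def DImproving (n : ℕ) (p : BV → ℚ) (π : DV → DV) (u u' : DV) : Prop :=
  DEdge n u u' ∧ 0 < zD n p π u u'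

/-- One (agent or positive-probability randomization) step of the process `𝔇_n` under `π`. -/
def DStep (n : ℕ) (p : BV → ℚ) (π : DV → DV) (u u' : DV) : Prop :=
  (IsDAgent n u ∧ u' = π u) ∨
  (∃ v w, DEdgePair n v w ∧ u = DV.y v w ∧
    ((u' = DV.z v w ∧ 0 < p v) ∨ (u' = DV.base v ∧ 0 < 1 - p v)))

/-- A policy for `𝔇_n` is weak unichain if it reaches `s` with probability one from every
vertex, i.e. `s` is reachable via active/positive-probability steps from every vertex. -/
def DWeakUnichain (n : ℕ) (p : BV → ℚ) (π : DV → DV) : Prop :=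
  ∀ u, IsDVertex n u → Relation.ReflTransGen (DStep n p π) u (DV.base BV.s)

/-- The twin policy of a policy `π` for `𝔅_n`: every vertex `v ≠ s` is `π v`-oriented. -/
def twin (π : BV → BV) : DV → DV := fun u =>
  match u with
  | DV.base v => if v = BV.s then DV.base BV.s else DV.x v (π v)
  | DV.x v w => if w = π v then DV.y v w else DV.base v
  | DV.y v w => DV.y v w
  | DV.z _ w => DV.base w

/-- The vertex numbering `𝒩_V` of `𝔅_n`: the order `(t, a 1, b 1, a 2, b 2, …, a n, b n, d, s)`. -/
def NV (n : ℕ) : BV → ℕ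
  | BV.t => 1
  | BV.a i => 2 * i
  | BV.b i => 2 * i + 1
  | BV.d => 2 * n + 2
  | BV.s => 2 * n + 3

/-- The specific probabilities `p_v = 2^{-𝒩_V(v)·(n+5)}`. -/
noncomputable def pSpec (n : ℕ) (v : BV) : ℚ := (2 : ℚ) ^ (-((NV n v * (n + 5) : ℕ) : ℤ))

/-- The set `B(v)` of agent edges of `𝔇_n` belonging to the vertex `v`. -/
def Belongs (n : ℕ) (v : BV) (e : DV × DV) : Prop :=
  ∃ w, DEdgePair n v w ∧
    (e = (DV.x v w, DV.y v w) ∨ e = (DV.base v, DV.x v w) ∨ e = (DV.x v w, DV.base v))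

/-- Applying the improving switch `e` to the policy `π` yields `π'`. -/
def DApply (n : ℕ) (p : BV → ℚ) (π : DV → DV) (e : DV × DV) (π' : DV → DV) : Prop :=
  DImproving n p π e.1 e.2 ∧ π' = Function.update π e.1 e.2

/-- One step of Bland's policy iteration on `𝔇_n` with edge numbering `N`. -/
def IsBlandStepD (n : ℕ) (p : BV → ℚ) (N : DV → DV → ℕ) (π π' : DV → DV) : Prop :=
  ∃ u u', DImproving n p π u u' ∧ (∀ a b, DImproving n p π a b → N u u' ≤ N a b) ∧
    π' = Function.update π u u'

/-- One step of Dantzig's policy iteration on `𝔇_n`: apply an improving switch of maximal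
reduced costs. -/
def DantzigStep (n : ℕ) (p : BV → ℚ) (π π' : DV → DV) : Prop :=
  ∃ u u', DImproving n p π u u' ∧
    (∀ a b, DImproving n p π a b → zD n p π a b ≤ zD n p π u u') ∧
    π' = Function.update π u u'

/-- The finite set of vertices of `𝔅_n`, as a `Finset`. -/
noncomputable def BVSet (n : ℕ) : Finset BV :=
  {BV.t, BV.d, BV.s} ∪ (Finset.Icc 1 n).image BV.a ∪ (Finset.Icc 1 n).image BV.b

/-- The finite set of agent vertices of `𝔇_n`, as a `Finset`. -/
noncomputable def DAgentSet (n : ℕ) : Finset DV := by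
  classical
  exact ((BVSet n).image DV.base) ∪
    (((BVSet n ×ˢ BVSet n).filter fun e => DEdgePair n e.1 e.2).image fun e => DV.x e.1 e.2) ∪
    (((BVSet n ×ˢ BVSet n).filter fun e => DEdgePair n e.1 e.2).image fun e => DV.z e.1 e.2)

/-- The objective of the Largest Increase rule: the sum of the values of all agent vertices. -/
noncomputable def LIobj (n : ℕ) (p : BV → ℚ) (π : DV → DV) : ℚ :=
  ∑ u ∈ DAgentSet n, DVal n p π u

/-- One step of the Largest Increase policy iteration on `𝔇_n`: apply an improving switch
maximizing the sum of all agent vertex values of the resulting policy. -/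
def LIStep (n : ℕ) (p : BV → ℚ) (π π' : DV → DV) : Prop :=
  ∃ u u', DImproving n p π u u' ∧
    (∀ a b, DImproving n p π a b →
      LIobj n p (Function.update π a b) ≤ LIobj n p (Function.update π u u')) ∧
    π' = Function.update π u u'

/-- `N` is a Bland numbering `𝒩_{𝔇_n}` for `𝔇_n`: it is injective on agent edges, the edges
`(x v w, v)` all come first, within each gadget `(x v w, y v w)` precedes `(v, x v w)`,
the gadget blocks are ordered according to `𝒩_{𝔅_n}`, and the self-loop comes last. -/
def IsDBlandNumbering (n : ℕ) (N : DV → DV → ℕ) : Prop :=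
  (∀ u₁ u₂ u₁' u₂', DEdge n u₁ u₂ → DEdge n u₁' u₂' → N u₁ u₂ = N u₁' u₂' →
    u₁ = u₁' ∧ u₂ = u₂') ∧
  (∀ v w v' w', DEdgePair n v w → DEdgePair n v' w' →
    N (DV.x v w) (DV.base v) < N (DV.x v' w') (DV.y v' w')) ∧
  (∀ v w, DEdgePair n v w → N (DV.x v w) (DV.y v w) < N (DV.base v) (DV.x v w)) ∧
  (∀ v w v' w', DEdgePair n v w → DEdgePair n v' w' → NB n v w < NB n v' w' →
    N (DV.base v) (DV.x v w) < N (DV.x v' w') (DV.y v' w')) ∧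
  (∀ v w, DEdgePair n v w → N (DV.base v) (DV.x v w) < N (DV.base BV.s) (DV.base BV.s))

/-!
Along every edge the reward is bounded by the drop of a fixed potential, so an improving switch
never closes a cycle, and applying it raises the values of exactly those vertices whose path uses
it, all by its reduced costs. Since travel edges come first in the Bland numbering and the other
edges are ordered by level, a switch on level `i` is only made when no travel edge and no edge on
a lower level is improving. The policy iteration therefore moves through four phases.

* As long as `travel 1` is active and no travel edge is improving, the optimal levels below `i`
  force the path from `t` up to level `i`. Hence the switch also benefits `t`, unless it is
  `enter m` and makes `travel m` the only improving travel edge.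
* Then `travel m` is applied next.
* Afterwards the levels below `m` are reset. No switch there affects the value of `t`, and the
  vertices `a k` keep values of at most `Val(t)` as long as no `enter` edge is applied. Because the
  values on these levels avoid an interval below `Val(t)`, an improving `enter i` has
  `Val(b i) ≥ Val(t)`, which optimality of the lower levels rules out unless `i = 1`. So it makes
  `travel 1` the only improving travel edge.
* Then `travel 1` is applied next, which leads back to the first phase.
-/

section Reachability

variable {α : Type*} {f : α → α} {x y z : α}

/-- `Reaches f x y` says that the forward orbit of `x` under `f` contains `y`; for a policy `f`
this means that the path starting at `x` visits `y`. -/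
def Reaches (f : α → α) (x y : α) : Prop := ∃ k, f^[k] x = y

namespace Reaches

theorem refl (f : α → α) (x : α) : Reaches f x x := ⟨0, rfl⟩

theorem trans (hxy : Reaches f x y) (hyz : Reaches f y z) : Reaches f x z := by
  obtain ⟨k, rfl⟩ := hxy
  obtain ⟨l, rfl⟩ := hyz
  exact ⟨l + k, Function.iterate_add_apply f l k x⟩

theorem of_eq (h : f x = y) : Reaches f x y := ⟨1, h⟩

theorem head (h : Reaches f (f x) y) : Reaches f x y := (of_eq rfl).trans h

theorem apply_of_ne (h : Reaches f x y) (hne : x ≠ y) : Reaches f (f x) y := by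
  obtain ⟨_ | k, hk⟩ := h
  · exact absurd hk hne
  · exact ⟨k, hk⟩

theorem head_induction {P : α → Prop} (h : Reaches f x y) (base : P y)
    (step : ∀ x, x ≠ y → Reaches f x y → P (f x) → P x) : P x := by
  obtain ⟨k, hk⟩ := h
  induction k generalizing x with
  | zero =>
    obtain rfl : x = y := hk
    exact base
  | succ k ih =>
    by_cases hxy : x = y
    · exact hxy ▸ base
    · exact step x hxy ⟨k + 1, hk⟩ (ih hk)

theorem eq_of_isFixedPt (h : Reaches f x y) (hx : Function.IsFixedPt f x) : y = x := by
  obtain ⟨k, rfl⟩ := h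
  exact hx.iterate k

theorem eq_of_apply_reaches {s : α} (hs : Function.IsFixedPt f s) (hxs : Reaches f x s)
    (h : Reaches f (f x) x) : x = s := by
  obtain ⟨k, hk⟩ := h
  obtain ⟨q, hq⟩ := hxs
  have hperiod : (f^[k + 1])^[q] x = x := Function.iterate_fixed hk q
  have hsink : f^[k * q + q] x = s := by
    rw [Function.iterate_add_apply, hq, hs.iterate]
  rw [← Function.iterate_mul, add_one_mul] at hperiod
  exact hperiod.symm.trans hsink

theorem antisymm {s : α} (hs : Function.IsFixedPt f s) (hxs : Reaches f x s)
    (hxy : Reaches f x y) (hyx : Reaches f y x) : x = y := by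
  by_contra hne
  have hx : x = s := eq_of_apply_reaches hs hxs ((hxy.apply_of_ne hne).trans hyx)
  subst hx
  exact hne (hxy.eq_of_isFixedPt hs).symm

variable [DecidableEq α] {u v : α}

theorem update_of_not_reaches (h : Reaches f x y) (hxu : ¬ Reaches f x u) :
    Reaches (Function.update f u v) x y := by
  revert hxu
  refine h.head_induction (P := fun x => ¬ Reaches f x u → Reaches (Function.update f u v) x y)
    (fun _ => refl _ y) fun x _ _ ih hxu => head ?_
  have hne : x ≠ u := by
    rintro rfl
    exact hxu (refl f x)
  rw [Function.update_of_ne hne]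
  exact ih fun hu => hxu hu.head

theorem update_of_reaches (h : Reaches f x u) (hv : Reaches (Function.update f u v) v y) :
    Reaches (Function.update f u v) x y := by
  refine h.head_induction (P := fun x => Reaches (Function.update f u v) x y)
    (head ?_) fun x hne _ ih => head ?_
  · rwa [Function.update_self]
  · rwa [Function.update_of_ne hne]

end Reaches

end Reachability

section Edges

variable {n i j k : ℕ} {u v : BV}

theorem aN_of_le (h : k ≤ n) : aN n k = .a k := if_neg (by lia)

theorem bN_of_le (h : k ≤ n) : bN n k = .b k := if_neg (by lia)

theorem aN_succ_self (n : ℕ) : aN n (n + 1) = .s := if_pos rfl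

theorem aN_ne_b (n j k : ℕ) : aN n j ≠ .b k := by
  unfold aN; split_ifs <;> simp

theorem isBVertex_aN (h1 : 1 ≤ k) (hk : k ≤ n + 1) : IsBVertex n (aN n k) := by
  unfold aN; split_ifs
  · trivial
  · exact ⟨h1, by lia⟩

theorem isBVertex_bN (h1 : 1 ≤ k) (hk : k ≤ n + 1) : IsBVertex n (bN n k) := by
  unfold bN; split_ifs
  · trivial
  · exact ⟨h1, by lia⟩

/-- The five kinds of edges that leave the vertices `a k` and `b k` of a level `k`, listed in the
order of the Bland numbering. -/
inductive LevelEdge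
  | enter | skip | board | stay | leave

namespace LevelEdge

/-- The tail of the level edge of the given kind on level `k`. -/
def source (k : ℕ) : LevelEdge → BV
  | enter | skip | board => .a k
  | stay | leave => .b k

/-- The head of the level edge of the given kind on level `k` of `𝔅_n`. -/
def target (n k : ℕ) : LevelEdge → BV
  | enter => .b k
  | skip | leave => aN n (k + 1)
  | board => .t
  | stay => bN n (k + 1)

/-- The position of a level edge among the edges of its level in the Bland numbering. -/
def rank : LevelEdge → ℕ
  | enter => 0
  | skip => 1
  | board => 2
  | stay => 3
  | leave => 4

theorem rank_le (e : LevelEdge) : e.rank ≤ 4 := by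
  cases e <;> simp [rank]

theorem source_ne_t (k : ℕ) (e : LevelEdge) : e.source k ≠ .t := by
  cases e <;> simp [source]

theorem a_ne_source (e : LevelEdge) (hij : i ≠ j) : .a i ≠ e.source j := by
  cases e <;> simp [source, hij]

theorem bEdge (e : LevelEdge) (h1 : 1 ≤ k) (hk : k ≤ n) :
    BEdge n (e.source k) (e.target n k) := by
  cases e <;> simp [BEdge, source, target, h1, hk]

theorem isBVertex_source (e : LevelEdge) (h1 : 1 ≤ k) (hk : k ≤ n) :
    IsBVertex n (e.source k) := by
  cases e <;> exact ⟨h1, hk⟩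

theorem isBVertex_target (e : LevelEdge) (h1 : 1 ≤ k) (hk : k ≤ n) :
    IsBVertex n (e.target n k) := by
  cases e
  · exact ⟨h1, hk⟩
  · exact isBVertex_aN (by lia) (by lia)
  · trivial
  · exact isBVertex_bN (by lia) (by lia)
  · exact isBVertex_aN (by lia) (by lia)

theorem nB_eq (e : LevelEdge) (n k : ℕ) :
    NB n (e.source k) (e.target n k) = n + 1 + e.rank + 5 * (k - 1) := by
  cases e <;> simp only [source, target, rank, aN, bN] <;> (try split_ifs) <;> rfl

end LevelEdge

theorem BEdge.travel_or_level_or_sink (h : BEdge n u v) :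
    (∃ k, 1 ≤ k ∧ k ≤ n ∧ u = .t ∧ v = .a k) ∨
    (∃ (e : LevelEdge) (k : ℕ), 1 ≤ k ∧ k ≤ n ∧ u = e.source k ∧ v = e.target n k) ∨
    (u = .d ∧ v = .s) ∨ (u = .s ∧ v = .s) := by
  rcases h with h | ⟨k, h⟩ | ⟨k, h⟩ | ⟨k, h⟩ | ⟨k, h⟩ | ⟨k, h⟩ | h | h
  · exact .inl h
  · exact .inr (.inl ⟨.enter, k, h⟩)
  · exact .inr (.inl ⟨.skip, k, h⟩)
  · exact .inr (.inl ⟨.board, k, h⟩)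
  · exact .inr (.inl ⟨.stay, k, h⟩)
  · exact .inr (.inl ⟨.leave, k, h⟩)
  · exact .inr (.inr (.inl h))
  · exact .inr (.inr (.inr h))

theorem bEdge_t_iff : BEdge n .t (.a k) ↔ 1 ≤ k ∧ k ≤ n := by
  simp [BEdge]

theorem BEdge.isBVertex (h : BEdge n u v) : IsBVertex n u ∧ IsBVertex n v := by
  rcases h.travel_or_level_or_sink with
    ⟨k, h1, hk, rfl, rfl⟩ | ⟨e, k, h1, hk, rfl, rfl⟩ | ⟨rfl, rfl⟩ | ⟨rfl, rfl⟩
  · exact ⟨trivial, h1, hk⟩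
  · exact ⟨e.isBVertex_source h1 hk, e.isBVertex_target h1 hk⟩
  · exact ⟨trivial, trivial⟩
  · exact ⟨trivial, trivial⟩

theorem BEdge.eq_of_a (h : BEdge n (.a k) v) : v = .b k ∨ v = aN n (k + 1) ∨ v = .t := by
  simp only [BEdge, BV.a.injEq, reduceCtorEq, false_and, and_false, exists_false, or_false,
    false_or] at h
  grind

theorem BEdge.eq_of_b (h : BEdge n (.b k) v) : v = bN n (k + 1) ∨ v = aN n (k + 1) := by
  simp only [BEdge, BV.b.injEq, reduceCtorEq, false_and, and_false, exists_false, or_false,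
    false_or] at h
  grind

theorem BEdge.eq_of_d (h : BEdge n .d v) : v = .s := by
  simpa [BEdge] using h

theorem BEdge.eq_of_s (h : BEdge n .s v) : v = .s := by
  simpa [BEdge] using h

theorem rB_aN (n k : ℕ) (u : BV) : rB n u (aN n k) = 0 := by
  unfold aN; split_ifs <;> cases u <;> rfl

theorem rB_stay (n k : ℕ) : rB n (.b k) (bN n (k + 1)) = 3 / 4 := by
  unfold bN; split_ifs with h
  · simp [rB, Nat.succ_injective h]
  · simp [rB]

theorem rB_enter (n k : ℕ) : rB n (.a k) (.b k) = 2 ^ k := if_pos rfl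

theorem rB_nonneg (n : ℕ) (u : BV) (hv : v ≠ .t) : 0 ≤ rB n u v := by
  cases u <;> cases v <;> simp only [rB, ne_eq, not_true_eq_false] at hv ⊢ <;>
    (try split_ifs) <;> first | exact absurd rfl hv | positivity

theorem two_le_two_pow (h : 1 ≤ k) : (2 : ℚ) ≤ 2 ^ k := le_self_pow₀ one_le_two (by lia)

end Edges

section Values

variable {n : ℕ} {π : BV → BV} {u x : BV}

/-- `IsUnichainPolicy n π` says that `π` is a weak unichain policy for `𝔅_n`. -/
structure IsUnichainPolicy (n : ℕ) (π : BV → BV) : Prop where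
  isBPolicy : IsBPolicy n π
  reaches_s : ∀ u, IsBVertex n u → Reaches π u .s

theorem bVal_s (n : ℕ) (π : BV → BV) : BVal n π .s = 0 := by
  have h : ∃ k, π^[k] .s = .s := ⟨0, rfl⟩
  have hfind : Nat.find h = 0 := (Nat.find_eq_zero h).2 rfl
  simp [BVal, h, hfind]

theorem bVal_of_ne_s (h : Reaches π u .s) (hu : u ≠ .s) :
    BVal n π u = rB n u (π u) + BVal n π (π u) := by
  classical
  have h : ∃ k, π^[k] u = .s := h
  have h' : ∃ k, π^[k] (π u) = .s := Reaches.apply_of_ne h hu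
  have hfind : Nat.find h = Nat.find h' + 1 := Nat.find_comp_succ h h' hu
  unfold BVal
  rw [dif_pos h, dif_pos h', hfind, Finset.sum_range_succ', add_comm]
  rfl

namespace IsUnichainPolicy

theorem apply_s (h : IsUnichainPolicy n π) : π .s = .s := (h.isBPolicy .s trivial).eq_of_s

theorem bVal_eq (h : IsUnichainPolicy n π) (hu : IsBVertex n u) :
    BVal n π u = rB n u (π u) + BVal n π (π u) := by
  by_cases hs : u = .s
  · subst hs
    rw [h.apply_s, ← aN_succ_self n, rB_aN, zero_add]
  · exact bVal_of_ne_s (h.reaches_s u hu) hs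

theorem not_reaches_t (h : IsUnichainPolicy n π) (hx : x ≠ .t) (htx : Reaches π .t x) :
    ¬ Reaches π x .t := fun hxt =>
  hx (Reaches.antisymm h.apply_s (h.reaches_s .t trivial) htx hxt).symm

theorem bVal_t_nonneg (h : IsUnichainPolicy n π) : 0 ≤ BVal n π .t := by
  refine Reaches.head_induction (P := fun x => Reaches π .t x → 0 ≤ BVal n π x)
    (h.reaches_s .t trivial) (fun _ => (bVal_s n π).ge) (fun x hne hxs ih htx => ?_)
    (Reaches.refl π .t)
  have hpath : Reaches π .t (π x) := htx.trans (.of_eq rfl)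
  have hnot_t : π x ≠ .t := fun hxt =>
    hne (Reaches.eq_of_apply_reaches h.apply_s hxs (hxt ▸ htx))
  rw [bVal_of_ne_s hxs hne]
  exact add_nonneg (rB_nonneg n x hnot_t) (ih hpath)

end IsUnichainPolicy

end Values

section Switches

variable {n : ℕ} {π : BV → BV} {u v x y : BV}

/-- A potential on the vertices of `𝔅_n` that drops along every edge by at least the reward of
that edge. Its existence shows that the rewards along a cycle never sum to a positive number, so
that no improving switch closes a cycle. -/
def potential (n : ℕ) : BV → ℚ
  | .t => -2
  | .s => -2 ^ (n + 1) - 2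
  | .d => -2 ^ (n + 1) - 1
  | .a i => -2 ^ i
  | .b i => -2 ^ (i + 1)

theorem BEdge.rB_add_potential_le (h : BEdge n u v) :
    rB n u v + potential n v ≤ potential n u := by
  rcases h.travel_or_level_or_sink with
    ⟨k, h1, -, rfl, rfl⟩ | ⟨e, k, h1, -, rfl, rfl⟩ | ⟨rfl, rfl⟩ | ⟨rfl, rfl⟩
  · have := two_le_two_pow h1
    simp only [rB, potential]
    linarith
  · have := two_le_two_pow h1
    have haN : potential n (aN n (k + 1)) ≤ -2 ^ (k + 1) := by
      unfold aN
      split_ifs with hkn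
      · simp [potential, hkn]
      · rfl
    have hbN : potential n (bN n (k + 1)) ≤ -2 ^ (k + 1) - 1 := by
      unfold bN
      split_ifs with hkn
      · simp [potential, hkn]
      · simp only [potential, pow_succ]
        linarith
    cases e <;> simp only [LevelEdge.source, LevelEdge.target, rB_aN, rB_stay, rB_enter] <;>
      simp only [potential, rB, pow_succ] at * <;> linarith
  · simp only [rB, potential]
    linarith
  · simp [rB]

namespace IsUnichainPolicy

theorem bVal_sub_le_potential_sub (h : IsUnichainPolicy n π) (hx : IsBVertex n x)
    (hxy : Reaches π x y) : BVal n π x - BVal n π y ≤ potential n x - potential n y := by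
  revert hx
  refine hxy.head_induction (P := fun x => IsBVertex n x →
    BVal n π x - BVal n π y ≤ potential n x - potential n y) (fun _ => by simp) ?_
  intro x _ _ ih hx
  have hedge := h.isBPolicy x hx
  have := ih hedge.isBVertex.2
  have := hedge.rB_add_potential_le
  have := h.bVal_eq hx
  linarith

theorem not_reaches_of_bImproving (h : IsUnichainPolicy n π) (himp : BImproving n π u v) :
    ¬ Reaches π v u := by
  intro hvu
  have := h.bVal_sub_le_potential_sub himp.1.isBVertex.2 hvu
  have := himp.1.rB_add_potential_le
  have := himp.2
  unfold zB at this
  linarith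

theorem update (h : IsUnichainPolicy n π) (himp : BImproving n π u v) :
    IsUnichainPolicy n (Function.update π u v) where
  isBPolicy x hx := by
    by_cases hxu : x = u
    · subst hxu
      rw [Function.update_self]
      exact himp.1
    · rw [Function.update_of_ne hxu]
      exact h.isBPolicy x hx
  reaches_s x hx := by
    by_cases hxu : Reaches π x u
    · exact hxu.update_of_reaches <| (h.reaches_s v himp.1.isBVertex.2).update_of_not_reaches
        (h.not_reaches_of_bImproving himp)
    · exact (h.reaches_s x hx).update_of_not_reaches hxu

theorem bVal_update_of_not_reaches (h : IsUnichainPolicy n π) (himp : BImproving n π u v)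
    (hx : IsBVertex n x) (hxu : ¬ Reaches π x u) :
    BVal n (Function.update π u v) x = BVal n π x := by
  have hxs := h.reaches_s x hx
  revert hx hxu
  refine hxs.head_induction (P := fun x => IsBVertex n x → ¬ Reaches π x u →
    BVal n (Function.update π u v) x = BVal n π x) (fun _ _ => by rw [bVal_s, bVal_s]) ?_
  intro x _ _ ih hx hxu
  have hne : x ≠ u := by
    rintro rfl
    exact hxu (.refl π x)
  rw [(h.update himp).bVal_eq hx, h.bVal_eq hx, Function.update_of_ne hne,
    ih (h.isBPolicy x hx).isBVertex.2 fun hu => hxu hu.head]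

theorem bVal_update_of_reaches (h : IsUnichainPolicy n π) (himp : BImproving n π u v)
    (hx : IsBVertex n x) (hxu : Reaches π x u) :
    BVal n (Function.update π u v) x = BVal n π x + zB n π u v := by
  revert hx
  refine hxu.head_induction (P := fun x => IsBVertex n x →
    BVal n (Function.update π u v) x = BVal n π x + zB n π u v) (fun hu => ?_) ?_
  · rw [(h.update himp).bVal_eq hu, Function.update_self,
      h.bVal_update_of_not_reaches himp himp.1.isBVertex.2 (h.not_reaches_of_bImproving himp), zB]
    ring
  · intro x hne _ ih hx
    rw [(h.update himp).bVal_eq hx, h.bVal_eq hx, Function.update_of_ne hne,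
      ih (h.isBPolicy x hx).isBVertex.2, add_assoc]

theorem le_bVal_update (h : IsUnichainPolicy n π) (himp : BImproving n π u v)
    (hx : IsBVertex n x) : BVal n π x ≤ BVal n (Function.update π u v) x := by
  by_cases hxu : Reaches π x u
  · rw [h.bVal_update_of_reaches himp hx hxu]
    exact le_add_of_nonneg_right himp.2.le
  · exact (h.bVal_update_of_not_reaches himp hx hxu).ge

theorem bVal_update_le (h : IsUnichainPolicy n π) (himp : BImproving n π u v)
    (hx : IsBVertex n x) : BVal n (Function.update π u v) x ≤ BVal n π x + zB n π u v := by
  by_cases hxu : Reaches π x u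
  · exact (h.bVal_update_of_reaches himp hx hxu).le
  · rw [h.bVal_update_of_not_reaches himp hx hxu]
    exact le_add_of_nonneg_right himp.2.le

end IsUnichainPolicy

end Switches

section Levels

variable {n j k : ℕ} {π : BV → BV} {u v x y : BV}

/-- The level of a vertex of `𝔅_n`: the index `i` of `a i` and `b i`. Along the edges that avoid
the transportation vertex the level never decreases. -/
def level (n : ℕ) : BV → ℕ
  | .t => 0
  | .s | .d => n + 1
  | .a i | .b i => i

theorem level_aN (n k : ℕ) : level n (aN n k) = k := by
  unfold aN
  split_ifs with h
  · exact h.symm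
  · rfl

theorem level_bN (n k : ℕ) : level n (bN n k) = k := by
  unfold bN
  split_ifs with h
  · exact h.symm
  · rfl

theorem LevelEdge.level_source (n k : ℕ) (e : LevelEdge) : level n (e.source k) = k := by
  cases e <;> rfl

theorem BEdge.level_le (h : BEdge n u v) (hu : u ≠ .t) (hv : v ≠ .t) : level n u ≤ level n v := by
  rcases h.travel_or_level_or_sink with
    ⟨k, -, -, rfl, rfl⟩ | ⟨e, k, -, -, rfl, rfl⟩ | ⟨rfl, rfl⟩ | ⟨rfl, rfl⟩
  · exact absurd rfl hu
  · cases e with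
    | enter => exact le_rfl
    | board => exact absurd rfl hv
    | skip | leave => exact (Nat.le_succ k).trans_eq (level_aN n (k + 1)).symm
    | stay => exact (Nat.le_succ k).trans_eq (level_bN n (k + 1)).symm
  · rfl
  · rfl

/-- The value `Val_π(a_k)`, where `a_{n+1} = s`. -/
noncomputable def valA (n : ℕ) (π : BV → BV) (k : ℕ) : ℚ := BVal n π (aN n k)

/-- The value `Val_π(b_k)`, where `b_{n+1} = d`. -/
noncomputable def valB (n : ℕ) (π : BV → BV) (k : ℕ) : ℚ := BVal n π (bN n k)

theorem bVal_a (hk : k ≤ n) : BVal n π (.a k) = valA n π k := by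
  rw [valA, aN_of_le hk]

theorem bVal_b (hk : k ≤ n) : BVal n π (.b k) = valB n π k := by
  rw [valB, bN_of_le hk]

theorem valA_succ_self (n : ℕ) (π : BV → BV) : valA n π (n + 1) = 0 := by
  rw [valA, aN_succ_self, bVal_s]

/-- The reduced costs of a level edge, expressed by the values of its endpoints. -/
noncomputable def LevelEdge.gain (n : ℕ) (π : BV → BV) (k : ℕ) : LevelEdge → ℚ
  | .enter => 2 ^ k + valB n π k - valA n π k
  | .skip => valA n π (k + 1) - valA n π k
  | .board => BVal n π .t - 2 ^ k + 5 / 4 - valA n π k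
  | .stay => 3 / 4 + valB n π (k + 1) - valB n π k
  | .leave => valA n π (k + 1) - valB n π k

theorem LevelEdge.zB_eq_gain (e : LevelEdge) (hk : k ≤ n) :
    zB n π (e.source k) (e.target n k) = e.gain n π k := by
  cases e <;> simp only [zB, source, target, gain, rB_enter, rB_aN, rB_stay, bVal_a hk, bVal_b hk]
    <;> simp only [valA, valB, rB] <;> ring

theorem LevelEdge.bImproving_iff (e : LevelEdge) (h1 : 1 ≤ k) (hk : k ≤ n) :
    BImproving n π (e.source k) (e.target n k) ↔ 0 < e.gain n π k := by
  rw [BImproving, e.zB_eq_gain hk, and_iff_right (e.bEdge h1 hk)]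

theorem zB_t (hk : k ≤ n) : zB n π .t (.a k) = valA n π k - BVal n π .t := by
  rw [zB, ← aN_of_le hk, rB_aN, zero_add, valA]

theorem bImproving_t_iff :
    BImproving n π .t (.a k) ↔ 1 ≤ k ∧ k ≤ n ∧ BVal n π .t < valA n π k := by
  rw [BImproving, bEdge_t_iff, and_assoc]
  refine and_congr_right fun _ => and_congr_right fun hk => ?_
  rw [zB_t hk, sub_pos]

namespace IsUnichainPolicy

theorem reaches_t_of_level_lt (h : IsUnichainPolicy n π) (hx : IsBVertex n x)
    (hxy : Reaches π x y) (hlt : level n y < level n x) : Reaches π x .t ∧ Reaches π .t y := by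
  revert hx hlt
  refine hxy.head_induction (P := fun x => IsBVertex n x → level n y < level n x →
    Reaches π x .t ∧ Reaches π .t y) (fun _ hlt => absurd hlt (lt_irrefl _)) ?_
  intro x hne hxy ih hx hlt
  by_cases hboard : π x = .t
  · exact ⟨.of_eq hboard, hboard ▸ hxy.apply_of_ne hne⟩
  · have hxt : x ≠ .t := by
      rintro rfl
      exact Nat.not_lt_zero _ hlt
    have hedge := h.isBPolicy x hx
    obtain ⟨hxt, hty⟩ := ih hedge.isBVertex.2 (hlt.trans_le (hedge.level_le hxt hboard))
    exact ⟨hxt.head, hty⟩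

theorem bVal_update_of_level_lt (h : IsUnichainPolicy n π) (himp : BImproving n π u v)
    (htu : ¬ Reaches π .t u) (hx : IsBVertex n x) (hlt : level n u < level n x) :
    BVal n (Function.update π u v) x = BVal n π x :=
  h.bVal_update_of_not_reaches himp hx fun hxu => htu (h.reaches_t_of_level_lt hx hxu hlt).2

theorem zB_apply (h : IsUnichainPolicy n π) (hu : IsBVertex n u) : zB n π u (π u) = 0 := by
  rw [zB, h.bVal_eq hu, sub_self]

theorem apply_ne_of_bImproving (h : IsUnichainPolicy n π) (himp : BImproving n π u v) :
    π u ≠ v := by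
  rintro rfl
  exact himp.2.ne' (h.zB_apply himp.1.isBVertex.1)

theorem gain_eq_zero (h : IsUnichainPolicy n π) (e : LevelEdge) (h1 : 1 ≤ k) (hk : k ≤ n)
    (hactive : π (e.source k) = e.target n k) : e.gain n π k = 0 := by
  rw [← e.zB_eq_gain hk, ← hactive, h.zB_apply (e.isBVertex_source h1 hk)]

theorem valA_of_enter (h : IsUnichainPolicy n π) (h1 : 1 ≤ k) (hk : k ≤ n)
    (hactive : π (.a k) = .b k) : valA n π k = 2 ^ k + valB n π k :=
  (sub_eq_zero.1 (h.gain_eq_zero .enter h1 hk hactive)).symm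

theorem valA_of_skip (h : IsUnichainPolicy n π) (h1 : 1 ≤ k) (hk : k ≤ n)
    (hactive : π (.a k) = aN n (k + 1)) : valA n π k = valA n π (k + 1) :=
  (sub_eq_zero.1 (h.gain_eq_zero .skip h1 hk hactive)).symm

theorem valA_of_board (h : IsUnichainPolicy n π) (h1 : 1 ≤ k) (hk : k ≤ n)
    (hactive : π (.a k) = .t) : valA n π k = BVal n π .t - 2 ^ k + 5 / 4 :=
  (sub_eq_zero.1 (h.gain_eq_zero .board h1 hk hactive)).symm

theorem valB_of_stay (h : IsUnichainPolicy n π) (h1 : 1 ≤ k) (hk : k ≤ n)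
    (hactive : π (.b k) = bN n (k + 1)) : valB n π k = 3 / 4 + valB n π (k + 1) :=
  (sub_eq_zero.1 (h.gain_eq_zero .stay h1 hk hactive)).symm

theorem valB_of_leave (h : IsUnichainPolicy n π) (h1 : 1 ≤ k) (hk : k ≤ n)
    (hactive : π (.b k) = aN n (k + 1)) : valB n π k = valA n π (k + 1) :=
  (sub_eq_zero.1 (h.gain_eq_zero .leave h1 hk hactive)).symm

theorem bVal_t_of_travel (h : IsUnichainPolicy n π) (hk : k ≤ n) (hactive : π .t = .a k) :
    BVal n π .t = valA n π k := by
  have := h.zB_apply (u := .t) trivial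
  rw [hactive, zB_t hk] at this
  exact (sub_eq_zero.1 this).symm

theorem valA_succ_self_le_bVal_t (h : IsUnichainPolicy n π) :
    valA n π (n + 1) ≤ BVal n π .t :=
  (valA_succ_self n π).trans_le h.bVal_t_nonneg

theorem valA_le_bVal_t_of_ne_enter (h : IsUnichainPolicy n π) (h1 : 1 ≤ k) (hk : k ≤ n)
    (hne : π (.a k) ≠ .b k) (hnext : valA n π (k + 1) ≤ BVal n π .t) :
    valA n π k ≤ BVal n π .t := by
  rcases (h.isBPolicy (.a k) ⟨h1, hk⟩).eq_of_a with henter | hskip | hboard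
  · exact absurd henter hne
  · exact (h.valA_of_skip h1 hk hskip).trans_le hnext
  · have := two_le_two_pow h1
    have := h.valA_of_board h1 hk hboard
    linarith

theorem valA_le_bVal_t_of_forall_ne_enter (h : IsUnichainPolicy n π) (hk : k ≤ n)
    (hne : ∀ j, 1 ≤ j → j ≤ k → π (.a j) ≠ .b j) (hnext : valA n π (k + 1) ≤ BVal n π .t)
    (h1 : 1 ≤ j) (hj : j ≤ k + 1) : valA n π j ≤ BVal n π .t := by
  induction hj using Nat.decreasingInduction with
  | self => exact hnext
  | of_succ j hj ih =>
    exact h.valA_le_bVal_t_of_ne_enter h1 (by lia) (hne j h1 (by lia)) (ih (by lia))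

end IsUnichainPolicy

end Levels

section BlandSteps

variable {n i j k m : ℕ} {π π' : BV → BV} {u v : BV} {e : LevelEdge}

/-- No edge `travel k` with `k ≠ m` is improving. For `m = 0` no travel edge at all is improving,
since the levels start at `1`. -/
def TravelOptimalExcept (n : ℕ) (π : BV → BV) (m : ℕ) : Prop :=
  ∀ k, 1 ≤ k → k ≤ n → k ≠ m → valA n π k ≤ BVal n π .t

/-- No edge that leaves a level below `i` is improving. -/
def OptimalBelow (n : ℕ) (π : BV → BV) (i : ℕ) : Prop :=
  ∀ k, 1 ≤ k → k < i → ∀ e : LevelEdge, e.gain n π k ≤ 0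

/-- The policy obtained from `π` by activating the level edge `e` on level `i`. -/
abbrev LevelEdge.applyTo (e : LevelEdge) (n : ℕ) (π : BV → BV) (i : ℕ) : BV → BV :=
  Function.update π (e.source i) (e.target n i)

/-- The level edge `e` on level `i` is the improving switch with the smallest number among all
level edges. -/
structure IsBlandLevelSwitch (n : ℕ) (π : BV → BV) (e : LevelEdge) (i : ℕ) : Prop where
  one_le : 1 ≤ i
  le : i ≤ n
  gain_pos : 0 < e.gain n π i
  optimalBelow : OptimalBelow n π i
  gain_nonpos : ∀ e' : LevelEdge, e'.rank < e.rank → e'.gain n π i ≤ 0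

theorem TravelOptimalExcept.eq_of_bImproving (h : TravelOptimalExcept n π m)
    (himp : BImproving n π .t (.a k)) : k = m := by
  obtain ⟨h1, hk, hlt⟩ := bImproving_t_iff.1 himp
  by_contra hne
  exact hlt.not_ge (h k h1 hk hne)

theorem travelOptimalExcept_zero_iff :
    TravelOptimalExcept n π 0 ↔ ∀ k, ¬ BImproving n π .t (.a k) := by
  simp only [TravelOptimalExcept, bImproving_t_iff, not_and, not_lt]
  exact forall_congr' fun k => ⟨fun h h1 hk => h h1 hk (by lia), fun h h1 hk _ => h h1 hk⟩

theorem IsBlandStep.travel_or_level (hstep : IsBlandStep n (NB n) π π')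
    (h : IsUnichainPolicy n π) :
    (∃ k, BImproving n π .t (.a k) ∧ π' = Function.update π .t (.a k)) ∨
    (TravelOptimalExcept n π 0 ∧ ∃ e i, IsBlandLevelSwitch n π e i ∧
      π' = e.applyTo n π i) := by
  obtain ⟨u, v, himp, hmin, rfl⟩ := hstep
  have hne := h.apply_ne_of_bImproving himp
  rcases himp.1.travel_or_level_or_sink with
    ⟨k, -, -, rfl, rfl⟩ | ⟨e, i, h1, hi, rfl, rfl⟩ | ⟨rfl, rfl⟩ | ⟨rfl, rfl⟩
  · exact .inl ⟨k, himp, rfl⟩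
  · have hnum : ∀ (e' : LevelEdge) k, 1 ≤ k → k ≤ n → 0 < e'.gain n π k →
        e.rank + 5 * (i - 1) ≤ e'.rank + 5 * (k - 1) := by
      intro e' k h1 hk hpos
      have := hmin _ _ ((e'.bImproving_iff h1 hk).2 hpos)
      rw [e.nB_eq, e'.nB_eq] at this
      lia
    refine .inr ⟨travelOptimalExcept_zero_iff.2 fun k hk => ?_, e, i,
      ⟨h1, hi, (e.bImproving_iff h1 hi).1 himp, fun k hk1 hki e' => ?_, fun e' he' => ?_⟩, rfl⟩
    · have : n + 1 + e.rank + 5 * (i - 1) ≤ k := e.nB_eq n i ▸ hmin _ _ hk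
      have := (bImproving_t_iff.1 hk).2.1
      lia
    · by_contra! hpos
      have := hnum e' k hk1 (by lia) hpos
      have := e'.rank_le
      lia
    · by_contra! hpos
      have := hnum e' i h1 hi hpos
      lia
  · exact absurd (h.isBPolicy .d trivial).eq_of_d hne
  · exact absurd h.apply_s hne

theorem OptimalBelow.valA_add_le (hopt : OptimalBelow n π i) (h1 : 1 ≤ j) (hj : j ≤ i) :
    valA n π j + 2 ^ j - 2 ≤ valA n π 1 := by
  induction j, h1 using Nat.le_induction with
  | base => norm_num
  | succ j h1 ih =>
    have henter := hopt j h1 hj .enter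
    have hleave := hopt j h1 hj .leave
    have := ih (by lia)
    simp only [LevelEdge.gain] at henter hleave
    rw [pow_succ]
    linarith

theorem OptimalBelow.valB_add_two_le (hopt : OptimalBelow n π i) (hi : 1 < i) (h1 : 1 ≤ j)
    (hj : j ≤ i) : valB n π j + 2 ≤ valA n π 1 := by
  induction j, h1 using Nat.le_induction with
  | base =>
    have henter := hopt 1 le_rfl hi .enter
    simp only [LevelEdge.gain] at henter
    linarith
  | succ j h1 ih =>
    have hstay := hopt j h1 hj .stay
    have := ih (by lia)
    simp only [LevelEdge.gain] at hstay
    linarith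

theorem TravelOptimalExcept.zero_of_le (hopt : TravelOptimalExcept n π m)
    (hm : valA n π m ≤ BVal n π .t) : TravelOptimalExcept n π 0 := by
  intro k h1 hk _
  by_cases hkm : k = m
  · exact hkm ▸ hm
  · exact hopt k h1 hk hkm

theorem TravelOptimalExcept.update_of_reaches (hopt : TravelOptimalExcept n π m)
    (h : IsUnichainPolicy n π) (himp : BImproving n π u v) (htu : Reaches π .t u) :
    TravelOptimalExcept n (Function.update π u v) m := by
  intro k h1 hk hkm
  have hle := h.bVal_update_le himp (isBVertex_aN (n := n) h1 (by lia))
  rw [h.bVal_update_of_reaches (x := .t) himp trivial htu]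
  exact hle.trans (add_le_add_left (hopt k h1 hk hkm) _)

theorem TravelOptimalExcept.update_travel (hopt : TravelOptimalExcept n π m)
    (h : IsUnichainPolicy n π) (himp : BImproving n π .t (.a m)) :
    TravelOptimalExcept n (Function.update π .t (.a m)) 0 := by
  refine (hopt.update_of_reaches h himp (.refl π .t)).zero_of_le ?_
  exact ((h.update himp).bVal_t_of_travel (bImproving_t_iff.1 himp).2.1
    (Function.update_self ..)).ge

namespace IsBlandLevelSwitch

theorem bImproving (hsw : IsBlandLevelSwitch n π e i) :
    BImproving n π (e.source i) (e.target n i) :=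
  (e.bImproving_iff hsw.one_le hsw.le).2 hsw.gain_pos

theorem isUnichainPolicy_applyTo (hsw : IsBlandLevelSwitch n π e i)
    (h : IsUnichainPolicy n π) : IsUnichainPolicy n (e.applyTo n π i) :=
  h.update hsw.bImproving

theorem bVal_t_applyTo (hsw : IsBlandLevelSwitch n π e i) (h : IsUnichainPolicy n π)
    (htu : ¬ Reaches π .t (e.source i)) : BVal n (e.applyTo n π i) .t = BVal n π .t :=
  h.bVal_update_of_not_reaches hsw.bImproving trivial htu

theorem valA_applyTo_of_reaches (hsw : IsBlandLevelSwitch n π e i) (h : IsUnichainPolicy n π)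
    (htu : ¬ Reaches π .t (e.source i)) (h1 : 1 ≤ k) (hk : k ≤ n) (htk : Reaches π .t (.a k)) :
    valA n (e.applyTo n π i) k = valA n π k := by
  rw [← bVal_a hk, ← bVal_a hk]
  exact h.bVal_update_of_not_reaches hsw.bImproving ⟨h1, hk⟩ fun hu => htu (htk.trans hu)

theorem valA_applyTo_of_lt (hsw : IsBlandLevelSwitch n π e i) (h : IsUnichainPolicy n π)
    (htu : ¬ Reaches π .t (e.source i)) (hik : i < k) (hk : k ≤ n + 1) :
    valA n (e.applyTo n π i) k = valA n π k :=
  h.bVal_update_of_level_lt hsw.bImproving htu (isBVertex_aN (by lia) hk) <| by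
    rwa [e.level_source, level_aN]

end IsBlandLevelSwitch

end BlandSteps

section Settled

variable {n i k m : ℕ} {π : BV → BV} {e : LevelEdge}

/-- The policies between two increments of the counter: `travel 1` is active and no travel edge
is improving. -/
structure IsSettled (n : ℕ) (π : BV → BV) : Prop where
  isUnichainPolicy : IsUnichainPolicy n π
  travel : π .t = .a 1
  travelOptimal : TravelOptimalExcept n π 0

/-- The policies in which `enter m` has just been applied and has made `travel m` improving. -/
structure IsEntered (n : ℕ) (π : BV → BV) (m : ℕ) : Prop where
  isUnichainPolicy : IsUnichainPolicy n π
  two_le : 2 ≤ m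
  enter : π (.a m) = .b m
  bImproving_travel : BImproving n π .t (.a m)
  travelOptimalExcept : TravelOptimalExcept n π m
  reaches_below : ∀ k, 1 ≤ k → k < m → Reaches π .t (.a k)
  valA_below : ∀ k, 1 ≤ k → k < m → valA n π k = valA n π m - 2 ^ k + 3 / 4

theorem IsUnichainPolicy.enter_of_gain_nonpos (h : IsUnichainPolicy n π) (h1 : 1 ≤ k) (hk : k ≤ n)
    (henter : LevelEdge.enter.gain n π k ≤ 0) (hleave : LevelEdge.leave.gain n π k ≤ 0)
    (htk : Reaches π .t (.a k)) : π (.a k) = .b k := by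
  rcases (h.isBPolicy (.a k) ⟨h1, hk⟩).eq_of_a with hactive | hskip | hboard
  · exact hactive
  · have := h.valA_of_skip h1 hk hskip
    have := two_le_two_pow h1
    simp only [LevelEdge.gain] at henter hleave
    linarith
  · exact absurd (.of_eq hboard) (h.not_reaches_t BV.noConfusion htk)

/-- Optimality forces the path from `t` to use `enter` and `leave` on every level below `i`, except
that it may `stay` on level `i - 1`; this pins down the values along it. -/
theorem IsUnichainPolicy.reaches_succ (h : IsUnichainPolicy n π) (hopt : OptimalBelow n π i)
    (h1 : 1 ≤ k) (hki : k < i) (hi : i ≤ n) (htk : Reaches π .t (.a k))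
    (hval : valA n π k = BVal n π .t - 2 ^ k + 2) :
    (Reaches π .t (.a (k + 1)) ∧ valA n π (k + 1) = BVal n π .t - 2 ^ (k + 1) + 2) ∨
    (k + 1 = i ∧ Reaches π .t (.b i) ∧ BVal n π .t + 5 / 4 = 2 ^ i + valB n π i) := by
  have hgain := hopt k h1 hki
  have hk : k ≤ n := by lia
  have hactive := h.enter_of_gain_nonpos h1 hk (hgain .enter) (hgain .leave) htk
  have hvalB := h.valA_of_enter h1 hk hactive
  have htb : Reaches π .t (π (.b k)) := htk.trans (.head (hactive ▸ .of_eq rfl))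
  rcases (h.isBPolicy (.b k) ⟨h1, hk⟩).eq_of_b with hstay | hleave
  · have hvalB' := h.valB_of_stay h1 hk hstay
    have hki' : k + 1 = i := by
      by_contra hne
      have henter := hopt (k + 1) (by lia) (by lia) .enter
      have hleave := hgain .leave
      have := two_le_two_pow h1
      simp only [LevelEdge.gain, pow_succ] at henter hleave
      linarith
    subst hki'
    rw [hstay, bN_of_le hi] at htb
    refine .inr ⟨rfl, htb, ?_⟩
    rw [pow_succ]
    linarith
  · have hvalA := h.valB_of_leave h1 hk hleave
    rw [hleave, aN_of_le (by lia)] at htb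
    refine .inl ⟨htb, ?_⟩
    rw [pow_succ]
    linarith

namespace IsSettled

theorem reaches_of_optimalBelow (h : IsSettled n π) (hopt : OptimalBelow n π i) (hi : i ≤ n)
    (h1 : 1 ≤ k) (hki : k ≤ i) :
    (Reaches π .t (.a k) ∧ valA n π k = BVal n π .t - 2 ^ k + 2) ∨
    (k = i ∧ 2 ≤ i ∧ Reaches π .t (.b i) ∧ BVal n π .t + 5 / 4 = 2 ^ i + valB n π i) := by
  induction k, h1 using Nat.le_induction with
  | base =>
    refine .inl ⟨.of_eq h.travel, ?_⟩
    rw [h.isUnichainPolicy.bVal_t_of_travel (by lia) h.travel]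
    ring
  | succ k h1 ih =>
    rcases ih (by lia) with ⟨htk, hval⟩ | ⟨hk, -⟩
    · refine (h.isUnichainPolicy.reaches_succ hopt h1 hki hi htk hval).imp_right ?_
      exact fun ⟨hk, htb⟩ => ⟨hk, by lia, htb⟩
    · lia

theorem reaches_of_lt (h : IsSettled n π) (hsw : IsBlandLevelSwitch n π e i) (h1 : 1 ≤ k)
    (hki : k < i) : Reaches π .t (.a k) ∧ valA n π k = BVal n π .t - 2 ^ k + 2 :=
  (h.reaches_of_optimalBelow hsw.optimalBelow hsw.le h1 hki.le).resolve_right fun hk =>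
    hki.ne hk.1

theorem travelOptimalExcept_applyTo (h : IsSettled n π) (hsw : IsBlandLevelSwitch n π e i)
    (htu : ¬ Reaches π .t (e.source i)) : TravelOptimalExcept n (e.applyTo n π i) i := by
  intro k h1 hk hki
  have hπ := h.isUnichainPolicy
  have hval : valA n (e.applyTo n π i) k = valA n π k := by
    rcases lt_or_gt_of_ne hki with hlt | hgt
    · exact hsw.valA_applyTo_of_reaches hπ htu h1 hk (h.reaches_of_lt hsw h1 hlt).1
    · exact hsw.valA_applyTo_of_lt hπ htu hgt (by lia)
  rw [hval, hsw.bVal_t_applyTo hπ htu]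
  exact h.travelOptimal k h1 hk (by lia)

theorem isEntered_applyTo (h : IsSettled n π) (hsw : IsBlandLevelSwitch n π e i)
    (htu : ¬ Reaches π .t (e.source i))
    (hlt : BVal n (e.applyTo n π i) .t < valA n (e.applyTo n π i) i) :
    IsEntered n (e.applyTo n π i) i := by
  have hπ := h.isUnichainPolicy
  have hπ' := hsw.isUnichainPolicy_applyTo hπ
  have hT := hsw.bVal_t_applyTo hπ htu
  have hother := h.travelOptimalExcept_applyTo hsw htu
  have hta : ¬ Reaches π .t (.a i) := fun hta => by
    rw [hsw.valA_applyTo_of_reaches hπ htu hsw.one_le hsw.le hta, hT] at hlt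
    exact hlt.not_ge (h.travelOptimal i hsw.one_le hsw.le (by have := hsw.one_le; lia))
  obtain ⟨-, hi2, htb, hvalB⟩ := (h.reaches_of_optimalBelow hsw.optimalBelow hsw.le hsw.one_le
    le_rfl).resolve_left fun ha => hta ha.1
  have hactive : e.applyTo n π i (.a i) = .b i := by
    by_contra hne
    refine hlt.not_ge (hπ'.valA_le_bVal_t_of_ne_enter hsw.one_le hsw.le hne ?_)
    rcases hsw.le.eq_or_lt with rfl | hin
    · exact hπ'.valA_succ_self_le_bVal_t
    · exact hother (i + 1) (by lia) (by lia) (by lia)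
  have hvalA : valA n (e.applyTo n π i) i = BVal n π .t + 5 / 4 := by
    rw [hπ'.valA_of_enter hsw.one_le hsw.le hactive, hvalB, ← bVal_b hsw.le, ← bVal_b hsw.le,
      hπ.bVal_update_of_not_reaches (x := .b i) hsw.bImproving ⟨hsw.one_le, hsw.le⟩
        fun hu => htu (htb.trans hu)]
  refine ⟨hπ', hi2, hactive, bImproving_t_iff.2 ⟨hsw.one_le, hsw.le, hlt⟩, hother,
    fun k h1 hki => ?_, fun k h1 hki => ?_⟩
  · exact (h.reaches_of_lt hsw h1 hki).1.update_of_not_reaches htu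
  · obtain ⟨htk, hval⟩ := h.reaches_of_lt hsw h1 hki
    rw [hsw.valA_applyTo_of_reaches hπ htu h1 (hki.le.trans hsw.le) htk, hval, hvalA]
    ring

theorem applyTo (h : IsSettled n π) (hsw : IsBlandLevelSwitch n π e i) :
    IsSettled n (e.applyTo n π i) ∨ IsEntered n (e.applyTo n π i) i := by
  have hπ := h.isUnichainPolicy
  have hsettled : TravelOptimalExcept n (e.applyTo n π i) 0 → IsSettled n (e.applyTo n π i) :=
    fun hopt => ⟨hsw.isUnichainPolicy_applyTo hπ,
      (Function.update_of_ne (e.source_ne_t i).symm ..).trans h.travel, hopt⟩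
  by_cases htu : Reaches π .t (e.source i)
  · exact .inl (hsettled (h.travelOptimal.update_of_reaches hπ hsw.bImproving htu))
  · rcases le_or_gt (valA n (e.applyTo n π i) i) (BVal n (e.applyTo n π i) .t) with hle | hlt
    · exact .inl (hsettled ((h.travelOptimalExcept_applyTo hsw htu).zero_of_le hle))
    · exact .inr (h.isEntered_applyTo hsw htu hlt)

end IsSettled

end Settled

section Reset

variable {n i k m : ℕ} {π : BV → BV} {e : LevelEdge}

/-- The policies after `travel m` has been applied, while the levels below `m` are reset to `0`:
their vertices `a k` are worth less than `t`, and those that still enter are worth so much less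
that `board k` is improving. -/
structure IsResetting (n : ℕ) (π : BV → BV) (m : ℕ) : Prop where
  isUnichainPolicy : IsUnichainPolicy n π
  two_le : 2 ≤ m
  le : m ≤ n
  travel : π .t = .a m
  enter : π (.a m) = .b m
  travelOptimal : TravelOptimalExcept n π 0
  le_valA_below : ∀ k, 1 ≤ k → k < m → BVal n π .t - 2 ^ k + 3 / 4 ≤ valA n π k
  valA_le_of_enter : ∀ k, 1 ≤ k → k < m → π (.a k) = .b k →
    valA n π k ≤ BVal n π .t - 2 ^ k + 3 / 4

theorem IsEntered.isResetting_update_travel (h : IsEntered n π m) :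
    IsResetting n (Function.update π .t (.a m)) m := by
  have hπ := h.isUnichainPolicy
  have himp := h.bImproving_travel
  have hm : m ≤ n := (bImproving_t_iff.1 himp).2.1
  have hT : BVal n (Function.update π .t (.a m)) .t = valA n π m := by
    rw [hπ.bVal_update_of_reaches (x := .t) himp trivial (.refl π .t), zB_t hm]
    ring
  have hvalA : ∀ k, 1 ≤ k → k < m → valA n (Function.update π .t (.a m)) k =
      BVal n (Function.update π .t (.a m)) .t - 2 ^ k + 3 / 4 := by
    intro k h1 hkm
    have hkn : k ≤ n := by lia
    have hkt := hπ.not_reaches_t BV.noConfusion (h.reaches_below k h1 hkm)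
    rw [hT, ← h.valA_below k h1 hkm, ← bVal_a hkn, ← bVal_a hkn]
    exact hπ.bVal_update_of_not_reaches himp ⟨h1, hkn⟩ hkt
  exact ⟨hπ.update himp, h.two_le, hm, Function.update_self .., h.enter,
    h.travelOptimalExcept.update_travel hπ himp, fun k h1 hkm => (hvalA k h1 hkm).ge,
    fun k h1 hkm _ => (hvalA k h1 hkm).le⟩

/-- The policies in which `enter 1` has just been applied and has made `travel 1` improving. -/
structure IsReturning (n : ℕ) (π : BV → BV) : Prop where
  isUnichainPolicy : IsUnichainPolicy n π
  bImproving_travel : BImproving n π .t (.a 1)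
  travelOptimalExcept : TravelOptimalExcept n π 1

theorem IsReturning.isSettled_update_travel (h : IsReturning n π) :
    IsSettled n (Function.update π .t (.a 1)) :=
  ⟨h.isUnichainPolicy.update h.bImproving_travel, Function.update_self ..,
    h.travelOptimalExcept.update_travel h.isUnichainPolicy h.bImproving_travel⟩

namespace IsResetting

theorem bVal_t (h : IsResetting n π m) : BVal n π .t = valA n π m :=
  h.isUnichainPolicy.bVal_t_of_travel h.le h.travel

theorem valB_gap (h : IsResetting n π m) (h1 : 1 ≤ k) (hk : k < m)
    (hA : valA n π (k + 1) ≤ BVal n π .t - 2 ^ (k + 1) + 5 / 4 ∨ BVal n π .t ≤ valA n π (k + 1))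
    (hB : valB n π (k + 1) ≤ BVal n π .t - 2 ^ (k + 1) + 1 / 2 ∨ BVal n π .t ≤ valB n π (k + 1)) :
    valB n π k ≤ BVal n π .t - 2 ^ (k + 1) + 5 / 4 ∨ BVal n π .t ≤ valB n π k := by
  have hπ := h.isUnichainPolicy
  have hkn : k ≤ n := hk.le.trans h.le
  rcases (hπ.isBPolicy (.b k) ⟨h1, hkn⟩).eq_of_b with hstay | hleave
  · have := hπ.valB_of_stay h1 hkn hstay
    exact hB.imp (fun _ => by linarith) fun _ => by linarith
  · rwa [hπ.valB_of_leave h1 hkn hleave]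

theorem valA_valB_gap (h : IsResetting n π m) (h1 : 1 ≤ k) (hk : k ≤ m) :
    (valA n π k ≤ BVal n π .t - 2 ^ k + 5 / 4 ∨ BVal n π .t ≤ valA n π k) ∧
    (valB n π k ≤ BVal n π .t - 2 ^ k + 1 / 2 ∨ BVal n π .t ≤ valB n π k) := by
  have hπ := h.isUnichainPolicy
  have hmn := h.le
  induction hk using Nat.decreasingInduction with
  | self =>
    have := hπ.valA_of_enter h1 hmn h.enter
    have := h.bVal_t
    exact ⟨.inr (by linarith), .inl (by linarith)⟩
  | of_succ k hk ih =>
    obtain ⟨hA, hB⟩ := ih (by lia)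
    have hkn : k ≤ n := by lia
    have hpow := two_le_two_pow h1
    have hgap := h.valB_gap h1 hk hA hB
    rw [pow_succ] at hA hgap
    refine ⟨?_, hgap.imp_left fun _ => by linarith⟩
    rcases (hπ.isBPolicy (.a k) ⟨h1, hkn⟩).eq_of_a with henter | hskip | hboard
    · have := hπ.valA_of_enter h1 hkn henter
      exact hgap.imp (fun _ => by linarith) fun _ => by linarith
    · have := hπ.valA_of_skip h1 hkn hskip
      exact hA.imp (fun _ => by linarith) fun _ => by linarith
    · exact .inl (hπ.valA_of_board h1 hkn hboard).le

theorem ne_enter_of_gain_board_nonpos (h : IsResetting n π m) (h1 : 1 ≤ k) (hk : k < m)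
    (hboard : LevelEdge.board.gain n π k ≤ 0) : π (.a k) ≠ .b k := by
  intro henter
  have := h.valA_le_of_enter k h1 hk henter
  simp only [LevelEdge.gain] at hboard
  linarith

theorem lt_of_optimalBelow (h : IsResetting n π m) (hopt : OptimalBelow n π i) : i < m := by
  by_contra! hmi
  have hm := hopt.valA_add_le (by have := h.two_le; lia) hmi
  have h1 := h.travelOptimal 1 le_rfl (by have := h.two_le; have := h.le; lia) one_ne_zero
  have hpow : (2 : ℚ) ^ 2 ≤ 2 ^ m := pow_le_pow_right₀ one_le_two h.two_le
  have := h.bVal_t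
  linarith

theorem not_reaches_source (h : IsResetting n π m) (him : i < m) :
    ¬ Reaches π .t (e.source i) := by
  intro htu
  have hmu : Reaches π (.a m) (e.source i) :=
    h.travel ▸ htu.apply_of_ne (e.source_ne_t i).symm
  have hm : IsBVertex n (.a m) := ⟨by lia, h.le⟩
  exact h.isUnichainPolicy.not_reaches_t BV.noConfusion (.of_eq h.travel)
    (h.isUnichainPolicy.reaches_t_of_level_lt hm hmu (by rwa [e.level_source])).1

theorem isResetting_applyTo (h : IsResetting n π m) (hsw : IsBlandLevelSwitch n π e i)
    (hne : e.applyTo n π i (.a i) ≠ .b i) : IsResetting n (e.applyTo n π i) m := by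
  have hπ := h.isUnichainPolicy
  have hπ' := hsw.isUnichainPolicy_applyTo hπ
  have him := h.lt_of_optimalBelow hsw.optimalBelow
  have hmn := h.le
  have htu := h.not_reaches_source (e := e) him
  have hT := hsw.bVal_t_applyTo hπ htu
  have hlevel : ∀ k, k ≠ i → e.applyTo n π i (.a k) = π (.a k) := fun k hki =>
    Function.update_of_ne (e.a_ne_source hki) ..
  have hbelow : ∀ j, 1 ≤ j → j ≤ i → e.applyTo n π i (.a j) ≠ .b j := by
    intro j h1 hji
    rcases hji.eq_or_lt with rfl | hlt
    · exact hne
    · rw [hlevel j hlt.ne]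
      exact h.ne_enter_of_gain_board_nonpos h1 (by lia) (hsw.optimalBelow j h1 hlt .board)
  have habove : ∀ k, i < k → k ≤ n → valA n (e.applyTo n π i) k ≤ BVal n π .t := by
    intro k hik hk
    rw [hsw.valA_applyTo_of_lt hπ htu hik (by lia)]
    exact h.travelOptimal k (by lia) hk (by lia)
  refine ⟨hπ', h.two_le, hmn, ?_, ?_, fun k h1 hk _ => ?_, fun k h1 hkm => ?_,
    fun k h1 hkm henter => ?_⟩
  · exact (Function.update_of_ne (e.source_ne_t i).symm ..).trans h.travel
  · exact (hlevel m him.ne').trans h.enter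
  · rcases le_or_gt k i with hki | hik
    · exact hπ'.valA_le_bVal_t_of_forall_ne_enter hsw.le hbelow
        ((habove (i + 1) (by lia) (by lia)).trans_eq hT.symm) h1 (by lia)
    · exact (habove k hik hk).trans_eq hT.symm
  · rw [hT]
    exact (h.le_valA_below k h1 hkm).trans
      (hπ.le_bVal_update hsw.bImproving (isBVertex_aN h1 (by lia)))
  · have hik : i < k := by
      by_contra! hki
      exact hbelow k h1 hki henter
    rw [hT, hsw.valA_applyTo_of_lt hπ htu hik (by lia)]
    exact h.valA_le_of_enter k h1 hkm (hlevel k hik.ne' ▸ henter)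

theorem bVal_t_le_valB (h : IsResetting n π m) (h1 : 1 ≤ i) (him : i < m)
    (hne : π (.a i) ≠ .b i) (hgain : 0 < LevelEdge.enter.gain n π i) :
    BVal n π .t ≤ valB n π i := by
  have hπ := h.isUnichainPolicy
  have hin : i ≤ n := him.le.trans h.le
  have hpow := two_le_two_pow h1
  obtain ⟨hA, hB⟩ := h.valA_valB_gap (k := i + 1) (by lia) him
  refine (h.valB_gap h1 him hA hB).resolve_left fun hle => ?_
  rw [pow_succ] at hA hle
  simp only [LevelEdge.gain] at hgain
  rcases (hπ.isBPolicy (.a i) ⟨h1, hin⟩).eq_of_a with henter | hskip | hboard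
  · exact hne henter
  · have := hπ.valA_of_skip h1 hin hskip
    have := h.le_valA_below i h1 him
    rcases hA with hA | hA <;> linarith
  · have := hπ.valA_of_board h1 hin hboard
    linarith

theorem isReturning_applyTo (h : IsResetting n π m)
    (hsw : IsBlandLevelSwitch n π .enter i) :
    IsReturning n (LevelEdge.enter.applyTo n π i) := by
  have hπ := h.isUnichainPolicy
  have hπ' := hsw.isUnichainPolicy_applyTo hπ
  have him := h.lt_of_optimalBelow hsw.optimalBelow
  have hmn := h.le
  have htu := h.not_reaches_source (e := .enter) him
  have hT := hsw.bVal_t_applyTo hπ htu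
  have hvalB := h.bVal_t_le_valB hsw.one_le him (hπ.apply_ne_of_bImproving hsw.bImproving)
    hsw.gain_pos
  obtain rfl : i = 1 := by
    by_contra hi
    have := hsw.optimalBelow.valB_add_two_le (by have := hsw.one_le; lia) hsw.one_le le_rfl
    have := h.travelOptimal 1 le_rfl (by lia) one_ne_zero
    linarith
  refine ⟨hπ', bImproving_t_iff.2 ⟨le_rfl, hsw.le, ?_⟩, fun k h1 hk hk1 => ?_⟩
  · have hvalB' : valB n π 1 ≤ valB n (LevelEdge.enter.applyTo n π 1) 1 :=
      hπ.le_bVal_update hsw.bImproving (isBVertex_bN le_rfl (by lia))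
    rw [hT, hπ'.valA_of_enter le_rfl hsw.le (Function.update_self ..)]
    linarith
  · rw [hT, hsw.valA_applyTo_of_lt hπ htu (by lia) (by lia)]
    exact h.travelOptimal k h1 hk (by lia)

theorem applyTo (h : IsResetting n π m) (hsw : IsBlandLevelSwitch n π e i) :
    IsResetting n (e.applyTo n π i) m ∨ IsReturning n (e.applyTo n π i) := by
  have him := h.lt_of_optimalBelow hsw.optimalBelow
  cases e with
  | enter => exact .inr (h.isReturning_applyTo hsw)
  | skip =>
    refine .inl (h.isResetting_applyTo hsw ?_)
    exact (Function.update_self ..).trans_ne (aN_ne_b n _ i)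
  | board =>
    refine .inl (h.isResetting_applyTo hsw ?_)
    exact (Function.update_self ..).trans_ne BV.noConfusion
  | stay | leave =>
    refine .inl (h.isResetting_applyTo hsw ?_)
    refine (Function.update_of_ne BV.noConfusion ..).trans_ne ?_
    exact h.ne_enter_of_gain_board_nonpos hsw.one_le him (hsw.gain_nonpos .board (by decide))

end IsResetting

end Reset

section Invariant

variable {n : ℕ} {π π' : BV → BV}

/-- The phases which Bland's policy iteration goes through. -/
inductive BlandPhase (n : ℕ) (π : BV → BV) : Prop
  | settled (h : IsSettled n π)
  | entered (m : ℕ) (h : IsEntered n π m)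
  | resetting (m : ℕ) (h : IsResetting n π m)
  | returning (h : IsReturning n π)

namespace BlandPhase

theorem isUnichainPolicy (h : BlandPhase n π) : IsUnichainPolicy n π := by
  cases h with
  | settled h | entered _ h | resetting _ h | returning h => exact h.isUnichainPolicy

theorem exists_travelOptimalExcept (h : BlandPhase n π) : ∃ m, TravelOptimalExcept n π m := by
  cases h with
  | settled h | resetting _ h => exact ⟨0, h.travelOptimal⟩
  | entered m h => exact ⟨m, h.travelOptimalExcept⟩
  | returning h => exact ⟨1, h.travelOptimalExcept⟩

theorem blandStep (h : BlandPhase n π) (hstep : IsBlandStep n (NB n) π π') :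
    BlandPhase n π' := by
  rcases hstep.travel_or_level h.isUnichainPolicy with
    ⟨k, himp, rfl⟩ | ⟨hopt, e, i, hsw, rfl⟩
  · cases h with
    | settled h | resetting _ h =>
      exact absurd himp (travelOptimalExcept_zero_iff.1 h.travelOptimal k)
    | entered m h =>
      obtain rfl := h.travelOptimalExcept.eq_of_bImproving himp
      exact .resetting k h.isResetting_update_travel
    | returning h =>
      obtain rfl := h.travelOptimalExcept.eq_of_bImproving himp
      exact .settled h.isSettled_update_travel
  · cases h with
    | settled h => exact (h.applyTo hsw).elim .settled (.entered i)
    | resetting m h => exact (h.applyTo hsw).elim (.resetting m) .returning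
    | entered _ h | returning h =>
      exact absurd h.bImproving_travel (travelOptimalExcept_zero_iff.1 hopt _)

end BlandPhase

theorem BlandReaches.blandPhase (hvis : BlandReaches n (NB n) π π') (h : BlandPhase n π) :
    BlandPhase n π' := by
  induction hvis with
  | refl => exact h
  | tail _ hstep ih => exact ih.blandStep hstep

end Invariant

section Initial

variable {n k : ℕ}

theorem isBPolicy_pi0 (hn : 1 ≤ n) : IsBPolicy n (pi0 n)
  | .t, _ => bEdge_t_iff.2 ⟨le_rfl, hn⟩
  | .s, _ => by simp [BEdge, pi0]
  | .d, _ => by simp [BEdge, pi0]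
  | .a _, h => LevelEdge.skip.bEdge h.1 h.2
  | .b _, h => LevelEdge.leave.bEdge h.1 h.2

theorem reaches_pi0_aN (hk : k ≤ n + 1) : Reaches (pi0 n) (aN n k) .s := by
  induction hk using Nat.decreasingInduction with
  | self => exact aN_succ_self n ▸ .refl _ _
  | of_succ k hk ih =>
    rw [aN_of_le (by lia)]
    exact .head ih

theorem isUnichainPolicy_pi0 (hn : 1 ≤ n) : IsUnichainPolicy n (pi0 n) where
  isBPolicy := isBPolicy_pi0 hn
  reaches_s
    | .t, _ => .head (show Reaches (pi0 n) (.a 1) .s from aN_of_le hn ▸ reaches_pi0_aN (by lia))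
    | .s, _ => .refl _ _
    | .d, _ => .of_eq rfl
    | .a _, h => aN_of_le h.2 ▸ reaches_pi0_aN (by have := h.2; lia)
    | .b _, h => .head (reaches_pi0_aN (by have := h.2; lia))

theorem not_bImproving_travel_pi0 (hn : 1 ≤ n) (k : ℕ) : ¬ BImproving n (pi0 n) .t (.a k) := by
  have h := isUnichainPolicy_pi0 hn
  intro himp
  obtain ⟨h1, hk, hlt⟩ := bImproving_t_iff.1 himp
  exact hlt.not_ge <| h.valA_le_bVal_t_of_forall_ne_enter le_rfl (fun j _ _ => aN_ne_b n (j + 1) j)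
    h.valA_succ_self_le_bVal_t h1 (by lia)

end Initial

theorem stmt8_general {n i j : ℕ} {π π' : BV → BV} (hπ : IsUnichainPolicy n π)
    (htravel : π .t = .a 1) (hopt : ∀ k, ¬ BImproving n π .t (.a k))
    (hvis : BlandReaches n (NB n) π π') (hi : BImproving n π' .t (.a i))
    (hj : BImproving n π' .t (.a j)) : i = j := by
  have hsettled : IsSettled n π := ⟨hπ, htravel, travelOptimalExcept_zero_iff.2 hopt⟩
  obtain ⟨m, hm⟩ := (hvis.blandPhase (.settled hsettled)).exists_travelOptimalExcept
  exact (hm.eq_of_bImproving hi).trans (hm.eq_of_bImproving hj).symm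

/-- For every policy visited by Bland's policy iteration on `𝔅_n` started at `π_0`,
at most one of the edges `travel i`, `i ∈ {1,…,n}`, is an improving switch. -/
theorem stmt8 (n : ℕ) (hn : 1 ≤ n) (π : BV → BV)
    (hvis : BlandReaches n (NB n) (pi0 n) π)
    (i j : ℕ) (hi1 : 1 ≤ i) (hin : i ≤ n) (hj1 : 1 ≤ j) (hjn : j ≤ n)
    (h1 : BImproving n π BV.t (BV.a i)) (h2 : BImproving n π BV.t (BV.a j)) :
    i = j :=
  stmt8_general (isUnichainPolicy_pi0 hn) rfl (not_bImproving_travel_pi0 hn) hvis h1 h2
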